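/- arXiv:2306.01909 — 2 statements merged into one kernel-verified Lean document; each statement's English description precedes it below -/
import Mathlib

section
/- Let X be a nonempty compact Hausdorff topological space and A a unital C*-algebra over ℂ, and let C(X, A) denote the unital C*-algebra of continuous functions from X to A with pointwise operations and supremum norm. Then every pure state ω on C(X, A) is a product state: there exist a point x ∈ X and a pure state φ on A such that ω(f) = φ(f(x)) for all f ∈ C(X, A). -/
/-- A state on a unital complex C*-algebra (or more generally a unital complex
star algebra): a `ℂ`-linear functional sending `1` to `1` and taking
nonnegative real values on elements of the form `star a * a`. -/
def IsState {A : Type*} [Ring A] [StarRing A] [Algebra ℂ A]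
    (φ : A →ₗ[ℂ] ℂ) : Prop :=
  φ 1 = 1 ∧ ∀ a : A, 0 ≤ (φ (star a * a)).re ∧ (φ (star a * a)).im = 0

/-!
Multiplying a pure state `ω` of `C(X, A)` by a nonnegative `g : C(X, ℝ)` gives a positive functional
dominated by `‖g‖ • ω`, hence a multiple of `ω`. So `ω (g • f) = ω (g • 1) * ω f` for all
`g : C(X, ℝ)`, and `g ↦ ω (g • 1)` is a character of `C(X, ℝ)`, that is, evaluation at some `x`.
Every `f` vanishing at `x` factors as `g • k` with `g x = 0`, so `ω` kills it and therefore factors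
through evaluation at `x`.
-/

open scoped ComplexOrder

section StarAlgebra

variable {A B : Type*} [Ring A] [StarRing A] [Algebra ℂ A] [Ring B] [StarRing B] [Algebra ℂ B]

/-- Positivity of a linear functional on a complex star algebra. The order on `ℂ` is the one for
which `0 ≤ z` means that `z` is real and nonnegative. -/
def IsPositiveFunctional (φ : A →ₗ[ℂ] ℂ) : Prop :=
  ∀ a : A, 0 ≤ φ (star a * a)

/-- Pure states: the extreme points of the state space, as a subset of the algebraic dual. -/
def IsPureState (φ : A →ₗ[ℂ] ℂ) : Prop :=
  φ ∈ Set.extremePoints ℝ {ψ : A →ₗ[ℂ] ℂ | IsState ψ}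

theorem isState_iff {φ : A →ₗ[ℂ] ℂ} : IsState φ ↔ φ 1 = 1 ∧ IsPositiveFunctional φ := by
  simp only [IsState, IsPositiveFunctional, Complex.nonneg_iff, eq_comm (a := (0 : ℝ))]

namespace IsPositiveFunctional

variable {φ ψ : A →ₗ[ℂ] ℂ}

theorem exists_map_one_eq_ofReal (hφ : IsPositiveFunctional φ) : ∃ r : ℝ, 0 ≤ r ∧ φ 1 = r := by
  have h : 0 ≤ φ 1 := by simpa only [star_one, mul_one] using hφ 1
  exact ⟨(φ 1).re, (Complex.nonneg_iff.1 h).1, Complex.eq_re_of_ofReal_le h⟩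

theorem add (hφ : IsPositiveFunctional φ) (hψ : IsPositiveFunctional ψ) :
    IsPositiveFunctional (φ + ψ) :=
  fun a ↦ add_nonneg (hφ a) (hψ a)

theorem real_smul {r : ℝ} (hr : 0 ≤ r) (hφ : IsPositiveFunctional φ) :
    IsPositiveFunctional (r • φ) :=
  fun a ↦ smul_nonneg hr (hφ a)

theorem isState_inv_smul {r : ℝ} (hφ : IsPositiveFunctional φ) (hr : 0 < r) (hφr : φ 1 = r) :
    IsState (r⁻¹ • φ) := by
  refine isState_iff.2 ⟨?_, hφ.real_smul (inv_nonneg.2 hr.le)⟩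
  rw [LinearMap.smul_apply, hφr, Complex.real_smul, ← Complex.ofReal_mul,
    inv_mul_cancel₀ hr.ne', Complex.ofReal_one]

end IsPositiveFunctional

namespace IsPureState

variable {ω φ : A →ₗ[ℂ] ℂ}

theorem isState (hω : IsPureState ω) : IsState ω :=
  hω.1

theorem eq_inv_smul_of_add_eq {ψ : A →ₗ[ℂ] ℂ} {s t : ℝ} (hω : IsPureState ω)
    (hφ : IsPositiveFunctional φ) (hψ : IsPositiveFunctional ψ) (hs : 0 < s) (ht : 0 < t)
    (hφs : φ 1 = s) (hψt : ψ 1 = t) (hsum : φ + ψ = (s + t) • ω) : s⁻¹ • φ = ω := by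
  refine hω.2 (hφ.isState_inv_smul hs hφs) (hψ.isState_inv_smul ht hψt)
    ⟨s / (s + t), t / (s + t), by positivity, by positivity, by field_simp, ?_⟩
  have hst : s + t ≠ 0 := by positivity
  calc (s / (s + t)) • s⁻¹ • φ + (t / (s + t)) • t⁻¹ • ψ
      = (s + t)⁻¹ • (φ + ψ) := by
        rw [smul_smul, smul_smul, smul_add]
        congr 2 <;> field_simp
    _ = ω := by rw [hsum, inv_smul_smul₀ hst]

-- Adding `ω` to both summands of `φ + (c • ω - φ)` makes their values at `1` strictly positive,
-- so they can be normalized without a Cauchy–Schwarz argument for the case `φ 1 = 0`.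
theorem eq_smul_of_dominated {c : ℝ} (hω : IsPureState ω) (hφ : IsPositiveFunctional φ)
    (hle : IsPositiveFunctional (c • ω - φ)) : φ = φ 1 • ω := by
  obtain ⟨hω_one, hω_pos⟩ := isState_iff.1 hω.isState
  obtain ⟨s, hs, hφs⟩ := hφ.exists_map_one_eq_ofReal
  obtain ⟨t, ht, hdiff⟩ := hle.exists_map_one_eq_ofReal
  have hc : s + t = c := by
    have h : (c : ℂ) - s = t := by simpa [hω_one, hφs] using hdiff
    exact_mod_cast (eq_add_of_sub_eq' h).symm
  have hnormalized : (s + 1)⁻¹ • (φ + ω) = ω :=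
    hω.eq_inv_smul_of_add_eq (t := t + 1) (hφ.add hω_pos) (hle.add hω_pos)
      (by positivity) (by positivity) (by simp [hφs, hω_one])
      (by rw [LinearMap.add_apply, hdiff, hω_one]; push_cast; rfl) (by rw [← hc]; module)
  have hsum : φ + ω = s • ω + ω := by
    rwa [inv_smul_eq_iff₀ (by positivity), add_smul, one_smul] at hnormalized
  rw [hφs, Complex.coe_smul]
  exact add_right_cancel hsum

end IsPureState

theorem isState_comp_iff {π : A →⋆ₐ[ℂ] B} (hπ : Function.Surjective π) {φ : B →ₗ[ℂ] ℂ} :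
    IsState (φ ∘ₗ π.toLinearMap) ↔ IsState φ := by
  simp [IsState, hπ.forall, map_star]

theorem IsPureState.of_comp {π : A →⋆ₐ[ℂ] B} (hπ : Function.Surjective π) {φ : B →ₗ[ℂ] ℂ}
    (h : IsPureState (φ ∘ₗ π.toLinearMap)) : IsPureState φ := by
  refine ⟨(isState_comp_iff hπ).1 h.isState, ?_⟩
  rintro φ₁ h₁ φ₂ h₂ ⟨a, b, ha, hb, hab, rfl⟩
  refine (LinearMap.cancel_right (g := π.toLinearMap) hπ).1 ?_
  exact h.2 ((isState_comp_iff hπ).2 h₁) ((isState_comp_iff hπ).2 h₂) ⟨a, b, ha, hb, hab, rfl⟩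

end StarAlgebra

section RealFunctions

variable {X : Type*} [TopologicalSpace X]

theorem exists_map_eq_zero_nonneg_pos_of_map_ne {τ : C(X, ℝ) →ₐ[ℝ] ℂ} {g : C(X, ℝ)} {x : X}
    (hg : τ g ≠ g x) : ∃ h : C(X, ℝ), τ h = 0 ∧ 0 ≤ h ∧ 0 < h x := by
  -- The witness is `|g - τ g|²`, where `τ g` may a priori be non-real.
  set z := τ g with hz
  refine ⟨(g - algebraMap ℝ _ z.re) ^ 2 + algebraMap ℝ _ (z.im ^ 2), ?_, fun y ↦ ?_, ?_⟩
  · have hsub : z - z.re = z.im * Complex.I := sub_eq_of_eq_add' z.re_add_im.symm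
    simp [← hz, hsub, mul_pow]
  · exact add_nonneg (sq_nonneg (g y - z.re)) (sq_nonneg z.im)
  · have hnormSq : 0 < Complex.normSq (g x - z) := Complex.normSq_pos.2 (sub_ne_zero.2 hg.symm)
    simpa [Complex.normSq_apply, pow_two] using hnormSq

theorem exists_algHom_eq_eval [CompactSpace X] (τ : C(X, ℝ) →ₐ[ℝ] ℂ) :
    ∃ x : X, ∀ g : C(X, ℝ), τ g = g x := by
  by_contra! h
  have exists_mem_ker (x : X) : ∃ g : C(X, ℝ), τ g = 0 ∧ 0 ≤ g ∧ 0 < g x :=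
    (h x).elim fun _ hg ↦ exists_map_eq_zero_nonneg_pos_of_map_ne hg
  choose g hτ hg_nonneg hg_pos using exists_mem_ker
  obtain ⟨t, ht⟩ := CompactSpace.elim_nhds_subcover (fun x ↦ {y | 0 < g x y})
    fun x ↦ (isOpen_lt continuous_const (g x).continuous).mem_nhds (hg_pos x)
  have hunit : IsUnit (∑ x ∈ t, g x) := by
    refine (ContinuousMap.isUnit_iff_forall_ne_zero _).2 fun y ↦ ?_
    obtain ⟨x, hx, hxy⟩ := Set.mem_iUnion₂.1 (ht.ge (Set.mem_univ y))
    rw [ContinuousMap.sum_apply]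
    exact (Finset.sum_pos' (fun z _ ↦ hg_nonneg z y) ⟨x, hx, hxy⟩).ne'
  exact (hunit.map τ).ne_zero (by simp [hτ])

section Factorization

variable {E : Type*} [NormedAddCommGroup E] [NormedSpace ℝ E]

theorem sqrt_norm_smul_inv_sqrt_norm_smul (e : E) : √‖e‖ • (√‖e‖)⁻¹ • e = e := by
  rcases eq_or_ne e 0 with rfl | he
  · simp
  · exact smul_inv_smul₀ (Real.sqrt_ne_zero'.2 (norm_pos_iff.2 he)) e

theorem continuous_inv_sqrt_norm_smul : Continuous fun e : E ↦ (√‖e‖)⁻¹ • e := by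
  have norm_eq (e : E) : ‖(√‖e‖)⁻¹ • e‖ = √‖e‖ := by
    rw [norm_smul, norm_inv, Real.norm_of_nonneg (Real.sqrt_nonneg _), inv_mul_eq_div,
      Real.div_sqrt]
  refine continuous_iff_continuousAt.2 fun e ↦ ?_
  rcases eq_or_ne e 0 with rfl | he
  · have htendsto : Filter.Tendsto (fun e : E ↦ √‖e‖) (nhds 0) (nhds 0) :=
      Continuous.tendsto' (by fun_prop) _ _ (by simp)
    simpa only [ContinuousAt, smul_zero] using squeeze_zero_norm (fun e ↦ (norm_eq e).le) htendsto
  · have : √‖e‖ ≠ 0 := Real.sqrt_ne_zero'.2 (norm_pos_iff.2 he)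
    fun_prop (disch := assumption)

theorem exists_eq_smul_and_forall_eq_zero (f : C(X, E)) :
    ∃ (g : C(X, ℝ)) (k : C(X, E)), f = g • k ∧ ∀ x, f x = 0 → g x = 0 := by
  refine ⟨⟨fun x ↦ √‖f x‖, by fun_prop⟩,
    ⟨fun x ↦ (√‖f x‖)⁻¹ • f x, continuous_inv_sqrt_norm_smul.comp f.continuous⟩, ?_, ?_⟩
  · ext x
    exact (sqrt_norm_smul_inv_sqrt_norm_smul (f x)).symm
  · intro x hx
    simp [hx]

end Factorization

end RealFunctions

section ContinuousMap

variable {X : Type*} [TopologicalSpace X] {A : Type*} [Ring A] [Algebra ℂ A] [TopologicalSpace A]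
  [IsTopologicalRing A]

section Eval

variable [StarRing A] [ContinuousStar A]

/-- Evaluation at a point as a star homomorphism. Mathlib's `ContinuousMap.evalStarAlgHom` is
restricted to commutative codomains. -/
def evalStarHom (x : X) : C(X, A) →⋆ₐ[ℂ] A where
  toFun f := f x
  map_one' := rfl
  map_mul' _ _ := rfl
  map_zero' := rfl
  map_add' _ _ := rfl
  commutes' _ := rfl
  map_star' _ := rfl

theorem evalStarHom_surjective (x : X) : Function.Surjective (evalStarHom (A := A) x) :=
  fun a ↦ ⟨.const X a, rfl⟩

end Eval

variable [ContinuousSMul ℝ A]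

/-- The functional `f ↦ ω (g • f)`, the analogue of a measure with density `g` with respect to
`ω`; when `ω` is a pure state it is a multiple of `ω`. -/
def weightedFunctional (ω : C(X, A) →ₗ[ℂ] ℂ) (g : C(X, ℝ)) : C(X, A) →ₗ[ℂ] ℂ where
  toFun f := ω (g • f)
  map_add' f₁ f₂ := by rw [smul_add, map_add]
  map_smul' c f := by
    rw [RingHom.id_apply, ← map_smul]
    congr 1
    ext x
    exact smul_comm (g x) c (f x)

theorem weightedFunctional_apply (ω : C(X, A) →ₗ[ℂ] ℂ) (g : C(X, ℝ)) (f : C(X, A)) :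
    weightedFunctional ω g f = ω (g • f) :=
  rfl

variable [StarRing A] [ContinuousStar A] [StarModule ℝ A]

theorem IsPositiveFunctional.weightedFunctional {ω : C(X, A) →ₗ[ℂ] ℂ}
    (hω : IsPositiveFunctional ω) {g : C(X, ℝ)} (hg : 0 ≤ g) :
    IsPositiveFunctional (weightedFunctional ω g) := by
  intro f
  let r : C(X, ℝ) := ⟨fun x ↦ √(g x), by fun_prop⟩
  have hsq : g • (star f * f) = star (r • f) * (r • f) := by
    ext x
    have hr : g x = r x * r x := (Real.mul_self_sqrt (hg x)).symm
    simp [hr, smul_smul]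
  rw [weightedFunctional_apply, hsq]
  exact hω (r • f)

namespace IsPureState

variable [CompactSpace X] {ω : C(X, A) →ₗ[ℂ] ℂ}

theorem map_smul_of_nonneg (hω : IsPureState ω) {g : C(X, ℝ)} (hg : 0 ≤ g) (f : C(X, A)) :
    ω (g • f) = ω (g • 1) * ω f := by
  have hpos : IsPositiveFunctional ω := (isState_iff.1 hω.isState).2
  have hle : 0 ≤ .const X ‖g‖ - g :=
    fun x ↦ sub_nonneg.2 ((Real.le_norm_self _).trans (g.norm_coe_le_norm x))
  have hsub : ‖g‖ • ω - weightedFunctional ω g = weightedFunctional ω (.const X ‖g‖ - g) := by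
    ext f
    have hconst : (ContinuousMap.const X ‖g‖) • f = ‖g‖ • f := rfl
    rw [weightedFunctional_apply, sub_smul, map_sub, hconst, ω.map_smul_of_tower]
    rfl
  exact LinearMap.congr_fun
    (hω.eq_smul_of_dominated (hpos.weightedFunctional hg) (hsub ▸ hpos.weightedFunctional hle)) f

theorem map_continuousMap_smul (hω : IsPureState ω) (g : C(X, ℝ)) (f : C(X, A)) :
    ω (g • f) = ω (g • 1) * ω f := by
  rw [← posPart_sub_negPart g]
  simp only [sub_smul, map_sub, sub_mul, hω.map_smul_of_nonneg (posPart_nonneg g) f,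
    hω.map_smul_of_nonneg (negPart_nonneg g) f]

/-- The character `g ↦ ω (g • 1)` of `C(X, ℝ)`: the restriction of the pure state `ω` to the scalar
functions. It is real-valued, but `ℂ` as codomain makes that a consequence of
`exists_algHom_eq_eval`. -/
noncomputable def character (hω : IsPureState ω) : C(X, ℝ) →ₐ[ℝ] ℂ :=
  AlgHom.ofLinearMap
    { toFun := fun g ↦ ω (g • 1)
      map_add' := fun g h ↦ by rw [add_smul, map_add]
      map_smul' := fun c g ↦ by
        rw [RingHom.id_apply, ← ω.map_smul_of_tower]
        congr 1
        ext x
        exact smul_assoc c (g x) (1 : A) }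
    (by simpa only [LinearMap.coe_mk, AddHom.coe_mk, one_smul] using hω.isState.1)
    (fun g h ↦ by
      simpa only [LinearMap.coe_mk, AddHom.coe_mk, mul_smul] using
        hω.map_continuousMap_smul g (h • 1))

theorem exists_forall_map_smul_eq (hω : IsPureState ω) :
    ∃ x : X, ∀ (g : C(X, ℝ)) (f : C(X, A)), ω (g • f) = g x * ω f := by
  obtain ⟨x, hx⟩ := exists_algHom_eq_eval hω.character
  refine ⟨x, fun g f ↦ ?_⟩
  rw [hω.map_continuousMap_smul, ← hx g]
  rfl

end IsPureState

end ContinuousMap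

theorem IsPureState.exists_eq_zero_of_apply_eq_zero {X : Type*} [TopologicalSpace X]
    [CompactSpace X] {A : Type*} [NormedRing A] [StarRing A] [NormedAlgebra ℂ A] [ContinuousStar A]
    [StarModule ℂ A] {ω : C(X, A) →ₗ[ℂ] ℂ} (hω : IsPureState ω) :
    ∃ x : X, ∀ f : C(X, A), f x = 0 → ω f = 0 := by
  obtain ⟨x, hx⟩ := hω.exists_forall_map_smul_eq
  refine ⟨x, fun f hf ↦ ?_⟩
  obtain ⟨g, k, rfl, hg⟩ := exists_eq_smul_and_forall_eq_zero f
  rw [hx, hg x hf, Complex.ofReal_zero, zero_mul]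

theorem pure_state_of_continuousMap_is_product_general
    {X : Type*} [TopologicalSpace X] [CompactSpace X]
    {A : Type*} [NormedRing A] [StarRing A] [NormedAlgebra ℂ A] [ContinuousStar A] [StarModule ℂ A]
    {ω : C(X, A) →ₗ[ℂ] ℂ} (hω : IsPureState ω) :
    ∃ (x : X) (φ : A →ₗ[ℂ] ℂ), IsPureState φ ∧ ∀ f : C(X, A), ω f = φ (f x) := by
  obtain ⟨x, hx⟩ := hω.exists_eq_zero_of_apply_eq_zero
  let φ : A →ₗ[ℂ] ℂ := ω ∘ₗ (ContinuousLinearMap.const ℂ X).toLinearMap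
  have hφ (f : C(X, A)) : ω f = φ (f x) := by
    have h := hx (f - .const X (f x)) (sub_self (f x))
    rwa [map_sub, sub_eq_zero] at h
  have hcomp : ω = φ ∘ₗ (evalStarHom x).toLinearMap := LinearMap.ext hφ
  exact ⟨x, φ, .of_comp (evalStarHom_surjective x) (hcomp ▸ hω), hφ⟩

/-- Takesaki's structure theorem for a commutative first factor: every pure
state (extreme point of the state space) of `C(X, A)` is a product state
`f ↦ φ (f x)` for some point `x ∈ X` and some pure state `φ` of `A`. -/
theorem pure_state_of_continuousMap_is_product
    (X : Type*) [TopologicalSpace X] [CompactSpace X] [T2Space X] [Nonempty X]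
    (A : Type*) [CStarAlgebra A]
    (ω : C(X, A) →ₗ[ℂ] ℂ)
    (hω : ω ∈ Set.extremePoints ℝ {φ : C(X, A) →ₗ[ℂ] ℂ | IsState φ}) :
    ∃ (x : X) (φ : A →ₗ[ℂ] ℂ),
      φ ∈ Set.extremePoints ℝ {ψ : A →ₗ[ℂ] ℂ | IsState ψ} ∧
      ∀ f : C(X, A), ω f = φ (f x) :=
  pure_state_of_continuousMap_is_product_general hω
end

section
/- Let A be a commutative unital C*-algebra over ℂ, let H be a nontrivial complex Hilbert space, and let π : A → B(H) be a unital star-algebra homomorphism into the bounded linear operators on H that is topologically irreducible, i.e. the only closed subspaces of H invariant under every operator π(a), a ∈ A, are {0} and H. Then H is one-dimensional (finrank ℂ H = 1). -/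
/-!
If a normal operator `T` had two distinct points in its spectrum, two continuous functions with
product zero, one nonzero at each of these points, would give nonzero operators `f(T)` and `g(T)`
with `f(T) g(T) = 0`. By Fuglede's theorem `f(T)` commutes with everything that commutes with `T`,
so if `T` commutes with an irreducible family, the kernel of `f(T)` is an invariant subspace and
`f(T)` is injective, a contradiction. Hence `T` is a scalar. An irreducible family of commuting
normal operators therefore consists of scalars, and then every line is invariant.
-/

open Module

/-- A family of continuous linear operators is topologically irreducible if its only common closed
invariant subspaces are `⊥` and `⊤`. Representations are viewed as families of operators, and the
zero space is not excluded. -/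
def IsTopologicallyIrreducible {ι R E : Type*} [Semiring R] [AddCommMonoid E] [Module R E]
    [TopologicalSpace E] (π : ι → E →L[R] E) : Prop :=
  ∀ K : Submodule R E, IsClosed (K : Set E) → (∀ i, ∀ x ∈ K, π i x ∈ K) → K = ⊥ ∨ K = ⊤

theorem IsTopologicallyIrreducible.eq_zero_or_injective_of_commute {ι R E : Type*} [Ring R]
    [AddCommGroup E] [Module R E] [TopologicalSpace E] [T1Space E] {π : ι → E →L[R] E}
    (hπ : IsTopologicallyIrreducible π) {T : E →L[R] E} (hT : ∀ i, Commute T (π i)) :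
    T = 0 ∨ Function.Injective T := by
  have ker_invariant : ∀ i, ∀ x ∈ T.ker, π i x ∈ T.ker := by
    intro i x (hx : T x = 0)
    calc T (π i x) = π i (T x) := DFunLike.congr_fun (hT i).eq x
      _ = 0 := by rw [hx, map_zero]
  rcases hπ T.ker T.isClosed_ker ker_invariant with ker_eq_bot | ker_eq_top
  · exact Or.inr (LinearMap.ker_eq_bot.mp ker_eq_bot)
  · exact Or.inl (ContinuousLinearMap.coe_injective (LinearMap.ker_eq_top.mp ker_eq_top))

theorem IsTopologicallyIrreducible.finrank_eq_one_of_forall_eq_algebraMap {ι 𝕜 E : Type*}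
    [NontriviallyNormedField 𝕜] [CompleteSpace 𝕜] [AddCommGroup E] [Module 𝕜 E]
    [TopologicalSpace E] [IsTopologicalAddGroup E] [ContinuousSMul 𝕜 E] [T2Space E] [Nontrivial E]
    {π : ι → E →L[𝕜] E} (hπ : IsTopologicallyIrreducible π)
    (hscalar : ∀ i, ∃ c : 𝕜, π i = algebraMap 𝕜 (E →L[𝕜] E) c) :
    finrank 𝕜 E = 1 := by
  obtain ⟨v, hv⟩ := exists_ne (0 : E)
  have line_invariant : ∀ i, ∀ x ∈ 𝕜 ∙ v, π i x ∈ 𝕜 ∙ v := by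
    intro i x hx
    obtain ⟨c, hc⟩ := hscalar i
    rw [hc]
    exact Submodule.smul_mem _ c hx
  rcases hπ (𝕜 ∙ v) (Submodule.closed_of_finiteDimensional _) line_invariant with hbot | htop
  · exact absurd (Submodule.span_singleton_eq_bot.mp hbot) hv
  · exact (finrank_eq_one_iff_of_nonzero v hv).mpr htop

theorem exists_continuous_mul_eq_zero_of_ne {X : Type*} [MetricSpace X] {x y : X} (hxy : x ≠ y) :
    ∃ f g : X → ℝ, Continuous f ∧ Continuous g ∧ f x ≠ 0 ∧ g y ≠ 0 ∧ ∀ z, f z * g z = 0 := by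
  -- The positive and negative parts of `dist z y - dist z x`.
  refine ⟨fun z ↦ max (dist z y - dist z x) 0, fun z ↦ max (dist z x - dist z y) 0,
    by fun_prop, by fun_prop, ?_, ?_, fun z ↦ ?_⟩
  · simpa using hxy
  · simpa using hxy.symm
  · rcases le_total (dist z x) (dist z y) with h | h <;> simp [h]

theorem exists_cfc_mul_cfc_eq_zero {𝕜 A : Type*} {p : A → Prop} [RCLike 𝕜] [Ring A] [StarRing A]
    [TopologicalSpace A] [Algebra 𝕜 A] [ContinuousFunctionalCalculus 𝕜 A p] {a : A} (ha : p a)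
    (hspec : (spectrum 𝕜 a).Nontrivial) :
    ∃ f g : 𝕜 → 𝕜, cfc f a ≠ 0 ∧ cfc g a ≠ 0 ∧ cfc f a * cfc g a = 0 := by
  obtain ⟨x, hx, y, hy, hxy⟩ := hspec
  obtain ⟨f, g, hf, hg, hfx, hgy, hfg⟩ := exists_continuous_mul_eq_zero_of_ne hxy
  have continuous_coe {h : 𝕜 → ℝ} (hh : Continuous h) :
      ContinuousOn (fun z ↦ (h z : 𝕜)) (spectrum 𝕜 a) :=
    (RCLike.continuous_ofReal.comp hh).continuousOn
  have cfc_ne_zero {h : 𝕜 → ℝ} (hh : Continuous h) {z : 𝕜} (hz : z ∈ spectrum 𝕜 a)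
      (hhz : h z ≠ 0) : cfc (fun w ↦ (h w : 𝕜)) a ≠ 0 := by
    intro hzero
    have eqOn_zero := eqOn_of_cfc_eq_cfc (hzero.trans (cfc_zero 𝕜 a).symm) (continuous_coe hh)
    exact hhz (RCLike.ofReal_eq_zero.mp (eqOn_zero hz))
  refine ⟨fun z ↦ f z, fun z ↦ g z, cfc_ne_zero hf hx hfx, cfc_ne_zero hg hy hgy, ?_⟩
  rw [← cfc_mul _ _ a (continuous_coe hf) (continuous_coe hg)]
  simp only [← RCLike.ofReal_mul, hfg, RCLike.ofReal_zero, cfc_const_zero]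

section Hilbert

variable {ι H : Type*} [NormedAddCommGroup H] [InnerProductSpace ℂ H] [CompleteSpace H]
  {π : ι → H →L[ℂ] H} {T : H →L[ℂ] H}

theorem IsTopologicallyIrreducible.spectrum_subsingleton_of_commute
    (hπ : IsTopologicallyIrreducible π) (hnormal : IsStarNormal T)
    (hT : ∀ i, Commute T (π i)) : (spectrum ℂ T).Subsingleton := by
  rw [← Set.not_nontrivial_iff]
  intro hspec
  obtain ⟨f, g, hf, hg, hfg⟩ := exists_cfc_mul_cfc_eq_zero hnormal hspec
  have cfc_commute : ∀ i, Commute (cfc f T) (π i) := fun i ↦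
    (hT i).cfc (hnormal.commute_star_left (hT i)) f
  have cfc_injective : Function.Injective ⇑(cfc f T : H →L[ℂ] H) :=
    (hπ.eq_zero_or_injective_of_commute cfc_commute).resolve_left hf
  apply hg
  ext x
  apply cfc_injective
  rw [zero_apply, map_zero]
  exact DFunLike.congr_fun hfg x

theorem IsTopologicallyIrreducible.exists_eq_algebraMap_of_commute
    (hπ : IsTopologicallyIrreducible π) (hnormal : IsStarNormal T)
    (hT : ∀ i, Commute T (π i)) : ∃ c : ℂ, T = algebraMap ℂ (H →L[ℂ] H) c := by
  obtain ⟨c, hc⟩ : ∃ c, spectrum ℂ T ⊆ {c} := by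
    rcases (hπ.spectrum_subsingleton_of_commute hnormal hT).eq_empty_or_singleton with h | ⟨c, h⟩
    · exact ⟨0, h ▸ Set.empty_subset _⟩
    · exact ⟨c, h.subset⟩
  exact ⟨c, CFC.eq_algebraMap_of_spectrum_subset_singleton T c hc⟩

theorem irreducible_representation_of_commutative_is_one_dimensional_general [Nontrivial H]
    (hπ : IsTopologicallyIrreducible π) (hnormal : ∀ i, IsStarNormal (π i))
    (hcomm : ∀ i j, Commute (π i) (π j)) : finrank ℂ H = 1 :=
  hπ.finrank_eq_one_of_forall_eq_algebraMap fun i ↦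
    hπ.exists_eq_algebraMap_of_commute (hnormal i) (hcomm i)

end Hilbert

/-- An irreducible representation of a commutative unital C*-algebra on a
nontrivial complex Hilbert space forces the Hilbert space to be
one-dimensional. -/
theorem irreducible_representation_of_commutative_is_one_dimensional
    (A : Type*) [CommCStarAlgebra A]
    (H : Type*) [NormedAddCommGroup H] [InnerProductSpace ℂ H] [CompleteSpace H]
    [Nontrivial H]
    (π : A →⋆ₐ[ℂ] (H →L[ℂ] H))
    (hirr : ∀ K : Submodule ℂ H, IsClosed (K : Set H) →
      (∀ a : A, ∀ x ∈ K, π a x ∈ K) → K = ⊥ ∨ K = ⊤) :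
    Module.finrank ℂ H = 1 :=
  irreducible_representation_of_commutative_is_one_dimensional_general (π := π) hirr
    (fun _ ↦ inferInstance) fun a b ↦ (Commute.all a b).map π
end
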